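/- Let n ≥ 2 be an integer, let λ be a real with −2/√(n+2) < λ ≤ 0, and set A = ((−λ + √(λ² + 4n))/2)·√(λ² + 4n). Let w : [0, π/2] → ℝ be continuous, C² on (0, π/2], satisfy w''(φ) = −(n−1)·cot(φ)·w'(φ) − A·w(φ) for all φ ∈ (0, π/2], with w(0) = 1 and lim_{φ → 0⁺} w'(φ) = 0. Then w(π/2) < 0 and w'(π/2) < 0. -/

import Mathlib

open Real Set Filter

/-!
The equation for `w` says that `w` is an eigenfunction, with eigenvalue `A`, of the Laplacian of
the unit sphere `Sⁿ` acting on functions of the polar angle. The round profile has radius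
`r = (-λ + √(λ² + 4n)) / 2`, the positive root of `r² + λ r = n`, so `A = n + r²`, and the bound on
`λ` says exactly that `r² < n + 2`. Hence `A` lies strictly between the first two nonzero
eigenvalues `n` and `2 (n + 1)` of `Sⁿ`, whose zonal eigenfunctions are `cos φ` and
`n cos² φ - sin² φ`. A Sturm comparison of `w'` with the derivative of the second eigenfunction
shows that `w'` cannot return to zero on `(0, π/2]`; a comparison with the first one then gives
`w (π/2) < 0`.
-/

section Calculus

variable {f f' g : ℝ → ℝ} {a b : ℝ}

lemma lt_of_hasDerivAt_neg (hab : a < b) (hf : ContinuousOn f (Icc a b))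
    (hf' : ∀ x ∈ Ioo a b, HasDerivAt f (f' x) x) (hneg : ∀ x ∈ Ioo a b, f' x < 0) :
    f b < f a := by
  obtain ⟨c, hc, hslope⟩ := exists_hasDerivAt_eq_slope f f' hab hf hf'
  have h := hneg c hc
  rw [hslope, div_lt_iff₀ (sub_pos.2 hab), zero_mul] at h
  exact sub_neg.1 h

lemma exists_first_zero (hab : a ≤ b) (hf : ContinuousOn f (Icc a b)) (ha : f a < 0)
    (hb : 0 ≤ f b) : ∃ c ∈ Ioc a b, f c = 0 ∧ ∀ x ∈ Ico a c, f x < 0 := by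
  have hcompact : IsCompact (Icc a b ∩ f ⁻¹' {0}) :=
    isCompact_Icc.of_isClosed_subset
      (hf.preimage_isClosed_of_isClosed isClosed_Icc isClosed_singleton) inter_subset_left
  have hnonempty : (Icc a b ∩ f ⁻¹' {0}).Nonempty := intermediate_value_Icc hab hf ⟨ha.le, hb⟩
  obtain ⟨c, ⟨hc, hfc : f c = 0⟩, hleast⟩ := hcompact.exists_isLeast hnonempty
  have hac : a ≠ c := fun h => ha.ne (h ▸ hfc)
  refine ⟨c, ⟨hc.1.lt_of_ne hac, hc.2⟩, hfc, fun x hx => ?_⟩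
  by_contra! hfx
  have hxb : x ≤ b := hx.2.le.trans hc.2
  obtain ⟨y, hy, hfy⟩ :=
    intermediate_value_Icc hx.1 (hf.mono (Icc_subset_Icc_right hxb)) ⟨ha.le, hfx⟩
  exact (hy.2.trans_lt hx.2).not_ge (hleast ⟨⟨hy.1, hy.2.trans hxb⟩, hfy⟩)

lemma eq_right_of_eqOn_Ioo (hab : a < b) (hf : ContinuousWithinAt f (Ioo a b) b)
    (hg : ContinuousWithinAt g (Ioo a b) b) (h : EqOn f g (Ioo a b)) : f b = g b :=
  have := right_nhdsWithin_Ioo_neBot hab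
  tendsto_nhds_unique_of_eventuallyEq hf hg (h.eventuallyEq_of_mem self_mem_nhdsWithin)

end Calculus

lemma sin_pos_of_mem_Ioc {x : ℝ} (hx : x ∈ Ioc 0 (π / 2)) : 0 < sin x :=
  sin_pos_of_pos_of_lt_pi hx.1 (by linarith [hx.2, pi_pos])

/-- A zonal eigenfunction of the sphere `Sⁿ`: a function `v` of the polar angle on a hemisphere,
with derivative `v'`, satisfying `Δ v = -μ v` for the Laplacian `Δ = ∂² + (n - 1) cot φ ∂`, and
smooth at the pole in the sense that `v' 0 = 0`. The dimension `n` may be any real number, and `v'`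
is a separate argument because its values at the endpoints are one-sided derivatives. The zero
function is included. -/
structure IsZonalEigenfunction (n μ : ℝ) (v v' : ℝ → ℝ) : Prop where
  continuousOn : ContinuousOn v (Icc 0 (π / 2))
  continuousOn_deriv : ContinuousOn v' (Icc 0 (π / 2))
  deriv_zero : v' 0 = 0
  hasDerivAt : ∀ x ∈ Ioo 0 (π / 2), HasDerivAt v (v' x) x
  hasDerivAt_deriv : ∀ x ∈ Ioo 0 (π / 2),
    HasDerivAt v' (-(n - 1) * (cos x / sin x) * v' x - μ * v x) x

lemma isZonalEigenfunction_cos (n : ℝ) : IsZonalEigenfunction n n cos (fun x => -sin x) where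
  continuousOn := continuousOn_cos
  continuousOn_deriv := continuousOn_sin.neg
  deriv_zero := by simp
  hasDerivAt x _ := hasDerivAt_cos x
  hasDerivAt_deriv x hx := by
    have hsin := (sin_pos_of_mem_Ioc (Ioo_subset_Ioc_self hx)).ne'
    refine (hasDerivAt_sin x).neg.congr_deriv ?_
    field_simp
    ring

lemma isZonalEigenfunction_mul_cos_sq_sub_sin_sq (n : ℝ) :
    IsZonalEigenfunction n (2 * (n + 1)) (fun x => n * cos x ^ 2 - sin x ^ 2)
      (fun x => -(2 * (n + 1)) * (sin x * cos x)) where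
  continuousOn := by fun_prop
  continuousOn_deriv := by fun_prop
  deriv_zero := by simp
  hasDerivAt x _ := by
    refine ((((hasDerivAt_cos x).pow 2).const_mul n).sub ((hasDerivAt_sin x).pow 2)).congr_deriv ?_
    push_cast
    ring
  hasDerivAt_deriv x hx := by
    have hsin := (sin_pos_of_mem_Ioc (Ioo_subset_Ioc_self hx)).ne'
    refine (((hasDerivAt_sin x).mul (hasDerivAt_cos x)).const_mul _).congr_deriv ?_
    field_simp
    ring

/-- The flux through a parallel of `Sⁿ` of the gradient of a zonal function with derivative `v'`;
in terms of it the eigenvalue equation takes the divergence form `(sinⁿ⁻¹ v')' = -μ sinⁿ⁻¹ v`. -/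
noncomputable def zonalFlux (n : ℝ) (v' : ℝ → ℝ) (x : ℝ) : ℝ :=
  sin x ^ (n - 1) * v' x

namespace IsZonalEigenfunction

variable {n μ A c : ℝ} {v v' w w' : ℝ → ℝ}

lemma continuousOn_zonalFlux (hv : IsZonalEigenfunction n μ v v') (hn : 1 ≤ n) :
    ContinuousOn (zonalFlux n v') (Icc 0 (π / 2)) :=
  (continuous_sin.rpow_const fun _ => Or.inr (sub_nonneg.2 hn)).continuousOn.mul
    hv.continuousOn_deriv

lemma zonalFlux_zero (hv : IsZonalEigenfunction n μ v v') : zonalFlux n v' 0 = 0 := by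
  rw [zonalFlux, hv.deriv_zero, mul_zero]

lemma hasDerivAt_zonalFlux (hv : IsZonalEigenfunction n μ v v') {x : ℝ}
    (hx : x ∈ Ioo 0 (π / 2)) :
    HasDerivAt (zonalFlux n v') (-(μ * (sin x ^ (n - 1) * v x))) x := by
  have hsin := (sin_pos_of_mem_Ioc (Ioo_subset_Ioc_self hx)).ne'
  refine (((hasDerivAt_sin x).rpow_const (Or.inl hsin)).mul
    (hv.hasDerivAt_deriv x hx)).congr_deriv ?_
  rw [rpow_sub_one hsin]
  field_simp
  ring

/-- The differentiated function is the Wronskian of the fluxes of `v` and `w`, since each flux has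
derivative `-sinⁿ⁻¹` times the eigenvalue times the function. -/
lemma hasDerivAt_flux_wronskian (hv : IsZonalEigenfunction n μ v v')
    (hw : IsZonalEigenfunction n A w w') {x : ℝ} (hx : x ∈ Ioo 0 (π / 2)) :
    HasDerivAt (fun y => A * w y * zonalFlux n v' y - μ * v y * zonalFlux n w' y)
      (-(sin x ^ (n - 1) * ((μ - A) * (v' x * w' x)))) x := by
  refine ((((hw.hasDerivAt x hx).const_mul A).mul (hv.hasDerivAt_zonalFlux hx)).sub
    (((hv.hasDerivAt x hx).const_mul μ).mul (hw.hasDerivAt_zonalFlux hx))).congr_deriv ?_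
  simp only [zonalFlux]
  ring

lemma sturm_comparison (hv : IsZonalEigenfunction n μ v v') (hw : IsZonalEigenfunction n A w w')
    (hn : 1 ≤ n) (hc : c ∈ Ioc 0 (π / 2)) (h : ∀ x ∈ Ioo 0 c, 0 < (μ - A) * (v' x * w' x)) :
    A * w c * v' c < μ * v c * w' c := by
  have hcont : ContinuousOn (fun y => A * w y * zonalFlux n v' y - μ * v y * zonalFlux n w' y)
      (Icc 0 (π / 2)) :=
    ((continuousOn_const.mul hw.continuousOn).mul (hv.continuousOn_zonalFlux hn)).sub
      ((continuousOn_const.mul hv.continuousOn).mul (hw.continuousOn_zonalFlux hn))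
  have hwronskian := lt_of_hasDerivAt_neg hc.1 (hcont.mono (Icc_subset_Icc_right hc.2))
    (fun x hx => hv.hasDerivAt_flux_wronskian hw ⟨hx.1, hx.2.trans_le hc.2⟩) fun x hx =>
      have hsin := sin_pos_of_mem_Ioc ⟨hx.1, hx.2.le.trans hc.2⟩
      neg_neg_of_pos (mul_pos (rpow_pos_of_pos hsin _) (h x hx))
  have hweighted : sin c ^ (n - 1) * (A * w c * v' c) < sin c ^ (n - 1) * (μ * v c * w' c) := by
    simp only [hv.zonalFlux_zero, hw.zonalFlux_zero] at hwronskian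
    simp only [zonalFlux] at hwronskian
    linarith
  exact lt_of_mul_lt_mul_left hweighted (rpow_nonneg (sin_pos_of_mem_Ioc hc).le _)

lemma deriv_neg_of_forall_pos (hw : IsZonalEigenfunction n A w w') (hn : 1 ≤ n) (hA : 0 < A)
    (hc : c ∈ Ioc 0 (π / 2)) (hpos : ∀ x ∈ Ioo 0 c, 0 < w x) : w' c < 0 := by
  have hflux : zonalFlux n w' c < zonalFlux n w' 0 := by
    refine lt_of_hasDerivAt_neg hc.1
      ((hw.continuousOn_zonalFlux hn).mono (Icc_subset_Icc_right hc.2))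
      (fun x hx => hw.hasDerivAt_zonalFlux ⟨hx.1, hx.2.trans_le hc.2⟩) fun x hx => ?_
    have hsin := sin_pos_of_mem_Ioc ⟨hx.1, hx.2.le.trans hc.2⟩
    exact neg_neg_of_pos (mul_pos hA (mul_pos (rpow_pos_of_pos hsin _) (hpos x hx)))
  rw [hw.zonalFlux_zero] at hflux
  exact neg_of_mul_neg_right hflux (rpow_nonneg (sin_pos_of_mem_Ioc hc).le _)

lemma exists_forall_deriv_neg (hw : IsZonalEigenfunction n A w w') (hn : 1 ≤ n) (hA : 0 < A)
    (hw0 : 0 < w 0) : ∃ δ ∈ Ioc 0 (π / 2), ∀ x ∈ Ioc 0 δ, w' x < 0 := by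
  have hpos : ∀ᶠ x in nhdsWithin 0 (Ici 0), 0 < w x := by
    rw [← nhdsWithin_Icc_eq_nhdsGE pi_div_two_pos]
    exact (hw.continuousOn 0 (left_mem_Icc.2 pi_div_two_pos.le)).eventually_const_lt hw0
  obtain ⟨δ, hδ, hsub⟩ := (mem_nhdsGE_iff_exists_mem_Ioc_Ico_subset pi_div_two_pos).1 hpos
  exact ⟨δ, hδ, fun x hx => hw.deriv_neg_of_forall_pos hn hA ⟨hx.1, hx.2.trans hδ.2⟩
    fun y hy => hsub ⟨hy.1.le, hy.2.trans_le hx.2⟩⟩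

/-- At a zero `c` of `w'`, comparison with the second eigenfunction would force `w c > 0`, hence
`w > 0` before `c`, and then the flux of `w` could not vanish at `c`. -/
lemma deriv_ne_zero_of_forall_deriv_neg (hw : IsZonalEigenfunction n A w w') (hn : 1 ≤ n)
    (hA : 0 < A) (hA' : A < 2 * (n + 1)) (hc : c ∈ Ioc 0 (π / 2))
    (hneg : ∀ x ∈ Ioo 0 c, w' x < 0) : w' c ≠ 0 := by
  intro hwc'
  have hcompare := (isZonalEigenfunction_mul_cos_sq_sub_sin_sq n).sturm_comparison hw hn hc
    fun x hx => by
    have hsin := sin_pos_of_mem_Ioc ⟨hx.1, hx.2.le.trans hc.2⟩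
    have hcos := cos_pos_of_mem_Ioo ⟨by linarith [hx.1, pi_pos], hx.2.trans_le hc.2⟩
    have hderiv : -(2 * (n + 1)) * (sin x * cos x) < 0 :=
      mul_neg_of_neg_of_pos (by linarith) (mul_pos hsin hcos)
    exact mul_pos (sub_pos.2 hA') (mul_pos_of_neg_of_neg hderiv (hneg x hx))
  have hwc : 0 < w c := by
    have hcos : 0 ≤ cos c := cos_nonneg_of_mem_Icc ⟨by linarith [hc.1, pi_pos], hc.2⟩
    have hcoeff : 0 ≤ 2 * (n + 1) * A * (sin c * cos c) :=
      mul_nonneg (mul_nonneg (by linarith) hA.le) (mul_nonneg (sin_pos_of_mem_Ioc hc).le hcos)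
    rw [hwc', mul_zero] at hcompare
    refine pos_of_mul_pos_right (b := w c) ?_ hcoeff
    linarith
  have hpos : ∀ x ∈ Ioo 0 c, 0 < w x := fun x hx => hwc.trans <|
    lt_of_hasDerivAt_neg hx.2 (hw.continuousOn.mono (Icc_subset_Icc hx.1.le hc.2))
      (fun y hy => hw.hasDerivAt y ⟨hx.1.trans hy.1, hy.2.trans_le hc.2⟩)
      fun y hy => hneg y ⟨hx.1.trans hy.1, hy.2⟩
  exact (hw.deriv_neg_of_forall_pos hn hA hc hpos).ne hwc'

theorem deriv_neg (hw : IsZonalEigenfunction n A w w') (hn : 1 ≤ n) (hA : 0 < A)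
    (hA' : A < 2 * (n + 1)) (hw0 : 0 < w 0) : ∀ x ∈ Ioc 0 (π / 2), w' x < 0 := by
  intro b hb
  by_contra! hwb
  obtain ⟨δ, hδ, hδneg⟩ := hw.exists_forall_deriv_neg hn hA hw0
  have hδb : δ ≤ b := by
    by_contra! hbδ
    exact (hδneg b ⟨hb.1, hbδ.le⟩).not_ge hwb
  obtain ⟨c, hc, hwc, hcneg⟩ := exists_first_zero hδb
    (hw.continuousOn_deriv.mono (Icc_subset_Icc hδ.1.le hb.2)) (hδneg δ ⟨hδ.1, le_rfl⟩) hwb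
  have hneg : ∀ x ∈ Ioo 0 c, w' x < 0 := fun x hx =>
    (le_total x δ).elim (fun h => hδneg x ⟨hx.1, h⟩) fun h => hcneg x ⟨h, hx.2⟩
  exact hw.deriv_ne_zero_of_forall_deriv_neg hn hA hA' ⟨hδ.1.trans hc.1, hc.2.trans hb.2⟩ hneg hwc

theorem apply_pi_div_two_neg (hw : IsZonalEigenfunction n A w w') (hn : 1 ≤ n) (hA : n < A)
    (hneg : ∀ x ∈ Ioo 0 (π / 2), w' x < 0) : w (π / 2) < 0 := by
  have hcompare := hw.sturm_comparison (isZonalEigenfunction_cos n) hn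
    (right_mem_Ioc.2 pi_div_two_pos) fun x hx =>
      mul_pos (sub_pos.2 hA) <| mul_pos_of_neg_of_neg (hneg x hx) <|
        neg_neg_of_pos (sin_pos_of_mem_Ioc (Ioo_subset_Ioc_self hx))
  rw [cos_pi_div_two, sin_pi_div_two] at hcompare
  exact neg_of_mul_neg_right (a := A) (by linarith) (by linarith)

end IsZonalEigenfunction

lemma exists_isZonalEigenfunction {n A : ℝ} {w : ℝ → ℝ}
    (hcont : ContinuousOn w (Icc 0 (π / 2))) (hC2 : ContDiffOn ℝ 2 w (Ioc 0 (π / 2)))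
    (hode : ∀ φ ∈ Ioo 0 (π / 2),
      deriv (deriv w) φ = -(n - 1) * (cos φ / sin φ) * deriv w φ - A * w φ)
    (hw0' : Tendsto (deriv w) (nhdsWithin 0 (Ioi 0)) (nhds 0)) :
    ∃ w', IsZonalEigenfunction n A w w' ∧ EqOn w' (deriv w) (Ioo 0 (π / 2)) := by
  have hC2' : ContDiffOn ℝ 2 w (Ioo 0 (π / 2)) := hC2.mono Ioo_subset_Ioc_self
  have hdiff : DifferentiableOn ℝ (deriv w) (Ioo 0 (π / 2)) :=
    (hC2'.deriv_of_isOpen (m := 1) isOpen_Ioo (by norm_num)).differentiableOn one_ne_zero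
  have hlim : Tendsto (deriv w) (nhdsWithin (π / 2) (Iio (π / 2)))
      (nhds (derivWithin w (Ioc 0 (π / 2)) (π / 2))) := by
    rw [← nhdsWithin_Ioo_eq_nhdsLT pi_div_two_pos]
    have hD := (hC2.continuousOn_derivWithin (uniqueDiffOn_Ioc _ _) (by norm_num)) _
      (right_mem_Ioc.2 pi_div_two_pos)
    refine (hD.mono_left (nhdsWithin_mono _ Ioo_subset_Ioc_self)).congr' ?_
    filter_upwards [self_mem_nhdsWithin] with x hx
    exact derivWithin_of_mem_nhds (Ioc_mem_nhds hx.1 hx.2)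
  have heq : EqOn (extendFrom (Ioo 0 (π / 2)) (deriv w)) (deriv w) (Ioo 0 (π / 2)) :=
    extendFrom_extends hdiff.continuousOn
  refine ⟨_, ⟨hcont, continuousOn_Icc_extendFrom_Ioo hdiff.continuousOn hw0' hlim,
    eq_lim_at_left_extendFrom_Ioo pi_div_two_pos hw0', fun x hx => ?_, fun x hx => ?_⟩, heq⟩
  · rw [heq hx]
    exact ((hC2'.contDiffAt (Ioo_mem_nhds hx.1 hx.2)).differentiableAt two_ne_zero).hasDerivAt
  · rw [heq hx, ← hode x hx]
    exact (hdiff.hasDerivAt (Ioo_mem_nhds hx.1 hx.2)).congr_of_eventuallyEq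
      (heq.eventuallyEq_of_mem (Ioo_mem_nhds hx.1 hx.2))

/-- The constant solution of the profile equation, that is, the radius of the round sphere in
`ℝⁿ⁺¹` that is a `λ`-hypersurface. -/
noncomputable def sphereRadius (n lam : ℝ) : ℝ :=
  (-lam + √(lam ^ 2 + 4 * n)) / 2

section SphereRadius

variable {n lam : ℝ}

lemma sphereRadius_pos (hn : 0 < n) : 0 < sphereRadius n lam := by
  have h : |lam| < √(lam ^ 2 + 4 * n) := by
    rw [← sqrt_sq_eq_abs]
    exact sqrt_lt_sqrt (sq_nonneg _) (by linarith)
  rw [sphereRadius]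
  linarith [le_abs_self lam]

lemma sphereRadius_sq_add_mul (hn : 0 ≤ n) :
    sphereRadius n lam ^ 2 + lam * sphereRadius n lam = n := by
  have h : √(lam ^ 2 + 4 * n) ^ 2 = lam ^ 2 + 4 * n := sq_sqrt (by positivity)
  rw [sphereRadius]
  linear_combination h / 4

lemma sphereRadius_mul_sqrt (hn : 0 ≤ n) :
    sphereRadius n lam * √(lam ^ 2 + 4 * n) = n + sphereRadius n lam ^ 2 := by
  have h : √(lam ^ 2 + 4 * n) = 2 * sphereRadius n lam + lam := by
    rw [sphereRadius]
    ring
  rw [h]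
  linear_combination sphereRadius_sq_add_mul (lam := lam) hn

lemma sphereRadius_sq_lt (hn : 0 < n) (hlam : -2 / √(n + 2) < lam) :
    sphereRadius n lam ^ 2 < n + 2 := by
  have ht : 0 < √(n + 2) := sqrt_pos.2 (by linarith)
  have ht2 : √(n + 2) ^ 2 = n + 2 := sq_sqrt (by linarith)
  have hr := sphereRadius_sq_add_mul (lam := lam) hn.le
  rw [div_lt_iff₀ ht] at hlam
  set r := sphereRadius n lam
  set t := √(n + 2)
  have hr0 : 0 < r := sphereRadius_pos hn
  suffices hrt : r < t by rw [← ht2]; gcongr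
  by_contra! htr
  -- `x ↦ x * (x + lam)` takes the value `n` at `r`, and a larger one at `t`.
  have hlt : n < t * (t + lam) := by linarith
  have hle : t * (t + lam) ≤ r * (r + lam) := by
    have : 0 < t + lam := pos_of_mul_pos_right (hn.trans hlt) ht.le
    gcongr
  linarith

end SphereRadius

theorem linearization_near_sphere_general
    {n lam A : ℝ} (hn : 1 ≤ n) (hlam : -2 / √(n + 2) < lam)
    (hA : A = ((-lam + √(lam ^ 2 + 4 * n)) / 2) * √(lam ^ 2 + 4 * n))
    {w : ℝ → ℝ}
    (hcont : ContinuousOn w (Icc 0 (π / 2)))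
    (hC2 : ContDiffOn ℝ 2 w (Ioc 0 (π / 2)))
    (hode : ∀ φ ∈ Ioc 0 (π / 2),
      deriv (deriv w) φ = -(n - 1) * (cos φ / sin φ) * deriv w φ - A * w φ)
    (hw0 : 0 < w 0)
    (hw0' : Tendsto (deriv w) (nhdsWithin 0 (Ioi 0)) (nhds 0)) :
    w (π / 2) < 0 ∧ deriv w (π / 2) < 0 := by
  have hn0 : 0 < n := by linarith
  have hA_radius : A = n + sphereRadius n lam ^ 2 := hA.trans (sphereRadius_mul_sqrt hn0.le)
  have hA_gt : n < A := by linarith [pow_pos (sphereRadius_pos (lam := lam) hn0) 2]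
  have hA_lt : A < 2 * (n + 1) := by linarith [sphereRadius_sq_lt hn0 hlam]
  obtain ⟨w', hw, hw'⟩ := exists_isZonalEigenfunction hcont hC2
    (fun φ hφ => hode φ (Ioo_subset_Ioc_self hφ)) hw0'
  have hneg := hw.deriv_neg hn (hn0.trans hA_gt) hA_lt hw0
  have hend : w (π / 2) < 0 :=
    hw.apply_pi_div_two_neg hn hA_gt fun x hx => hneg x (Ioo_subset_Ioc_self hx)
  have hmem : π / 2 ∈ Ioc 0 (π / 2) := right_mem_Ioc.2 pi_div_two_pos
  -- The equation at `π / 2` gives `w'' (π / 2) ≠ 0`, so the two-sided `deriv w` is differentiable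
  -- there and `deriv w (π / 2)` is not a junk value.
  have hdiff : DifferentiableAt ℝ (deriv w) (π / 2) :=
    differentiableAt_of_deriv_ne_zero <| by
      simpa [hode _ hmem] using ⟨(hn0.trans hA_gt).ne', hend.ne⟩
  have hderiv : deriv w (π / 2) = w' (π / 2) :=
    eq_right_of_eqOn_Ioo pi_div_two_pos hdiff.continuousAt.continuousWithinAt
      ((hw.continuousOn_deriv _ (Ioc_subset_Icc_self hmem)).mono Ioo_subset_Icc_self) hw'.symm
  exact ⟨hend, hderiv ▸ hneg _ hmem⟩

/-- Lemma 3.4: for `-2/√(n+2) < λ ≤ 0` and `A = ((-λ+√(λ²+4n))/2)·√(λ²+4n)`, the solution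
of the linearized equation `w'' = -(n-1) cot(φ) w' - A w` on `(0, π/2]` with `w(0) = 1`
and `w'(φ) → 0` as `φ → 0⁺` satisfies `w(π/2) < 0` and `w'(π/2) < 0`. -/
theorem linearization_near_sphere
    (n : ℕ) (hn : 2 ≤ n) (lam : ℝ)
    (hlam₁ : -2 / Real.sqrt ((n : ℝ) + 2) < lam) (hlam₂ : lam ≤ 0)
    (A : ℝ)
    (hA : A = ((-lam + Real.sqrt (lam ^ 2 + 4 * n)) / 2) * Real.sqrt (lam ^ 2 + 4 * n))
    (w : ℝ → ℝ)
    (hcont : ContinuousOn w (Icc 0 (Real.pi / 2)))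
    (hC2 : ContDiffOn ℝ 2 w (Ioc 0 (Real.pi / 2)))
    (hode : ∀ φ ∈ Ioc (0 : ℝ) (Real.pi / 2),
      deriv (deriv w) φ =
        -((n : ℝ) - 1) * (Real.cos φ / Real.sin φ) * deriv w φ - A * w φ)
    (hw0 : w 0 = 1)
    (hw0' : Tendsto (deriv w) (nhdsWithin 0 (Ioi 0)) (nhds 0)) :
    w (Real.pi / 2) < 0 ∧ deriv w (Real.pi / 2) < 0 :=
  linearization_near_sphere_general (by exact_mod_cast one_le_two.trans hn) hlam₁ hA hcont hC2 hode
    (hw0 ▸ one_pos) hw0'
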